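/- Assume there exists a (λ,κ)-Luzin set in [0,1]^n (for uncountable cardinals κ ≤ λ and n ≥ 1). Then there exists an n-dimensional uniform Eberlein compact space K of weight λ such that every closed subspace L of K of weight ≥ κ has covering dimension n. In particular, K has no closed zero-dimensional subspace of weight ≥ κ. -/

import Mathlib

open scoped ENNReal

/-- `K` is uniform Eberlein compact: compact and embeddable into a Hilbert
space `ℓ₂(Γ)` with its weak topology. -/
def IsUniformEberlein (K : Type) [TopologicalSpace K] : Prop :=
  letI : Fact ((1 : ℝ≥0∞) ≤ 2) := ⟨one_le_two⟩
  CompactSpace K ∧ ∃ (Γ : Type)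
    (f : K → WeakSpace ℝ ↥(lp (fun _ : Γ => ℝ) 2)), Topology.IsEmbedding f

/-- A space is zero-dimensional if it has a base of clopen sets. -/
def IsZeroDim (X : Type*) [TopologicalSpace X] : Prop :=
  ∃ B : Set (Set X), (∀ U ∈ B, IsClopen U) ∧ TopologicalSpace.IsTopologicalBasis B

/-- The weight of a topological space: the least cardinality of a base. -/
noncomputable def tweight (X : Type*) [TopologicalSpace X] : Cardinal :=
  sInf {c | ∃ B : Set (Set X), TopologicalSpace.IsTopologicalBasis B ∧ Cardinal.mk B = c}

/-- Covering dimension `≤ n`: every finite open cover has an open shrinking of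
order at most `n + 1`. -/
def CovDimLE (X : Type*) [TopologicalSpace X] (n : ℕ) : Prop :=
  ∀ (m : ℕ) (U : Fin m → Set X), (∀ i, IsOpen (U i)) → (⋃ i, U i) = Set.univ →
    ∃ V : Fin m → Set X, (∀ i, IsOpen (V i) ∧ V i ⊆ U i) ∧ (⋃ i, V i) = Set.univ ∧
      ∀ x : X, Set.ncard {i | x ∈ V i} ≤ n + 1

/-- The covering dimension equals `n`. -/
def HasCovDim (X : Type*) [TopologicalSpace X] (n : ℕ) : Prop :=
  CovDimLE X n ∧ ∀ m : ℕ, CovDimLE X m → n ≤ m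

/-- The unit cube `[0,1]^n`. -/
abbrev Cube (n : ℕ) : Type := Fin n → ↥(Set.Icc (0 : ℝ) 1)

/-! Let `X` be the Luzin set and let `K` be the Aleksandrov duplicate of the cube with isolated
points over `X` only. Adding a unit vector of `ℓ²(X)` over each isolated point to an embedding of
the cube into `ℓ²` makes `K` uniform Eberlein compact.

The weight of a closed `L ⊆ K` is governed by the set `A ⊆ X` over which `L` contains isolated
points. If the weight is at least `κ`, then `A` is not nowhere dense by the Luzin property, and
since isolated points over distinct points of `A` accumulate only at the non-isolated copy of the
cube, `L` contains the copy of a nonempty open set, hence the copy of a smaller cube.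

That the cube has dimension at least `n` follows from the Poincaré–Miranda theorem, applied to
maxima of functions subordinate to a cover. Its combinatorial core works with cubical cochains
modulo two: if `sᵢ` is a `0`-`1` function on a grid that vanishes on the face `xᵢ = 0` and is `1` on
the opposite face, then `δ s₁ ⌣ ⋯ ⌣ δ sₙ` sums to `1` over the grid, so on some cell no `sᵢ` is
constant. For the upper bound, `n + 1` shifted grids of small open cells cover the cube, and a cover
of `K` is shrunk along the retraction of `K` onto the cube, up to isolated points.
-/

section CubicalCochains

variable {ι R : Type*} [DecidableEq ι] [CommRing R]

/-- The coboundary of a cubical cochain on the lattice `ι → ℕ`. A cochain assigns `η H x` to the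
cell with lowest vertex `x` and edge directions `H`; since signs are omitted, this is the usual
coboundary only in characteristic two. -/
def cubicalCoboundary (η : Finset ι → (ι → ℕ) → R) (H : Finset ι) (x : ι → ℕ) : R :=
  ∑ d ∈ H, (η (H.erase d) (x + Pi.single d 1) - η (H.erase d) x)

/-- The cochain `δ (s₁ δ (s₂ δ (⋯)))`, that is, the cup product `δ s₁ ⌣ δ s₂ ⌣ ⋯` of the
coboundaries of the functions `s₁, s₂, …`. -/
def cupCochain : List ((ι → ℕ) → R) → Finset ι → (ι → ℕ) → R
  | [] => fun H _ => if H = ∅ then 1 else 0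
  | s :: l => cubicalCoboundary fun H x => s x * cupCochain l H x

lemma sum_sum_erase_eq_zero [CharP R 2] (H : Finset ι) (f : ι → ι → R)
    (hf : ∀ d e, f d e = f e d) : ∑ d ∈ H, ∑ e ∈ H.erase d, f d e = 0 := by
  rw [Finset.sum_sigma']
  refine Finset.sum_involution (fun p _ ↦ ⟨p.2, p.1⟩) (fun p _ ↦ ?_) ?_ ?_ fun _ _ ↦ rfl
  · rw [hf p.2 p.1, CharTwo.add_self_eq_zero]
  · rintro ⟨d, e⟩ hde - heq
    simp_all
  · simp +contextual [eq_comm]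

lemma cubicalCoboundary_cubicalCoboundary [CharP R 2] (η : Finset ι → (ι → ℕ) → R)
    (H : Finset ι) (x : ι → ℕ) : cubicalCoboundary (cubicalCoboundary η) H x = 0 := by
  simp only [cubicalCoboundary, ← Finset.sum_sub_distrib]
  refine sum_sum_erase_eq_zero H (fun d e ↦
    η ((H.erase d).erase e) (x + Pi.single d 1 + Pi.single e 1) -
      η ((H.erase d).erase e) (x + Pi.single d 1) -
      (η ((H.erase d).erase e) (x + Pi.single e 1) - η ((H.erase d).erase e) x)) fun d e ↦ ?_
  simp only [Finset.erase_right_comm (a := d), add_right_comm x (Pi.single d 1)]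
  ring

lemma cubicalCoboundary_cupCochain [CharP R 2] (l : List ((ι → ℕ) → R)) (H : Finset ι)
    (x : ι → ℕ) : cubicalCoboundary (cupCochain l) H x = 0 := by
  cases l with
  | nil => simp [cubicalCoboundary, cupCochain]
  | cons s l => exact cubicalCoboundary_cubicalCoboundary _ H x

lemma Icc_add_sum_erase_subset {H : Finset ι} {d : ι} (hd : d ∈ H) (x : ι → ℕ) {y : ι → ℕ}
    (hy : y = x ∨ y = x + Pi.single d 1) :
    Set.Icc y (y + ∑ e ∈ H.erase d, Pi.single e 1) ⊆ Set.Icc x (x + ∑ e ∈ H, Pi.single e 1) := by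
  rw [← Finset.add_sum_erase H _ hd, ← add_assoc]
  rcases hy with rfl | rfl
  · exact Set.Icc_subset_Icc_right (add_le_add_left le_self_add _)
  · exact Set.Icc_subset_Icc_left le_self_add

lemma cupCochain_eq_zero_of_forall_mem_Icc [CharP R 2] {l : List ((ι → ℕ) → R)}
    {s : (ι → ℕ) → R} (hs : s ∈ l) {a : R} {H : Finset ι} {x : ι → ℕ}
    (h : ∀ y ∈ Set.Icc x (x + ∑ d ∈ H, Pi.single d 1), s y = a) : cupCochain l H x = 0 := by
  induction l generalizing H x with
  | nil => simp at hs
  | cons t l ih =>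
    have hfacet {d : ι} (hd : d ∈ H) {y : ι → ℕ} (hy : y = x ∨ y = x + Pi.single d 1) :
        ∀ z ∈ Set.Icc y (y + ∑ e ∈ H.erase d, Pi.single e 1), s z = a :=
      fun z hz ↦ h z (Icc_add_sum_erase_subset hd x hy hz)
    rcases List.mem_cons.1 hs with rfl | hs
    · have hsub : cupCochain (s :: l) H x = a * cubicalCoboundary (cupCochain l) H x := by
        simp only [cupCochain, cubicalCoboundary, Finset.mul_sum, mul_sub]
        refine Finset.sum_congr rfl fun d hd ↦ ?_
        rw [hfacet hd (.inl rfl) x (by simp), hfacet hd (.inr rfl) (x + Pi.single d 1) (by simp)]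
      rw [hsub, cubicalCoboundary_cupCochain, mul_zero]
    · refine Finset.sum_eq_zero fun d hd ↦ ?_
      simp only [ih hs (hfacet hd (.inl rfl)), ih hs (hfacet hd (.inr rfl)), mul_zero, sub_zero]

lemma cupCochain_eq_zero_of_notMem [CharP R 2] {l : List ((ι → ℕ) → R)} {s : (ι → ℕ) → R}
    (hs : s ∈ l) {a : R} {H : Finset ι} {d : ι} (hd : d ∉ H) {x : ι → ℕ}
    (h : ∀ y, y d = x d → s y = a) : cupCochain l H x = 0 := by
  refine cupCochain_eq_zero_of_forall_mem_Icc hs (a := a) fun y hy ↦ h y ?_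
  refine le_antisymm ((hy.2 d).trans_eq ?_) (hy.1 d)
  simp [Finset.sum_apply, Pi.single_apply, hd]

variable [Fintype ι]

lemma sum_piFinset_eq_sum_update {α M : Type*} [AddCommMonoid M] (t : ι → Finset α) (d : ι)
    (a : α) (F : (ι → α) → M) :
    ∑ x ∈ Fintype.piFinset t, F x =
      ∑ x ∈ Fintype.piFinset (Function.update t d {a}), ∑ j ∈ t d, F (Function.update x d j) := by
  rw [← Finset.sum_product']
  refine Finset.sum_nbij' (fun x ↦ (Function.update x d a, x d))
    (fun p ↦ Function.update p.1 d p.2) ?_ ?_ ?_ ?_ ?_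
  · intro x hx
    simp only [Fintype.mem_piFinset, Finset.mem_product] at hx ⊢
    refine ⟨fun i ↦ ?_, hx d⟩
    obtain rfl | hid := eq_or_ne i d <;> simp [*]
  · intro p hp
    simp only [Fintype.mem_piFinset, Finset.mem_product] at hp ⊢
    intro i
    obtain rfl | hid := eq_or_ne i d
    · simpa using hp.2
    · simpa [hid] using hp.1 i
  · simp
  · intro p hp
    have hpd : p.1 d = a := by simpa using Fintype.mem_piFinset.1 (Finset.mem_product.1 hp).1 d
    ext1 <;> simp [← hpd]
  · simp

lemma sum_piFinset_cubicalCoboundary (η : Finset ι → (ι → ℕ) → R) {H : Finset ι} {N : ℕ}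
    {t : ι → Finset ℕ} (ht : ∀ d ∈ H, t d = Finset.range N) :
    ∑ x ∈ Fintype.piFinset t, cubicalCoboundary η H x =
      ∑ d ∈ H, ∑ x ∈ Fintype.piFinset (Function.update t d {0}),
        (η (H.erase d) (Function.update x d N) - η (H.erase d) x) := by
  simp only [cubicalCoboundary]
  rw [Finset.sum_comm]
  refine Finset.sum_congr rfl fun d hd ↦ ?_
  rw [sum_piFinset_eq_sum_update t d 0, ht d hd]
  refine Finset.sum_congr rfl fun x hx ↦ ?_
  have hxd : x d = 0 := by simpa using Fintype.mem_piFinset.1 hx d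
  have hstep (j : ℕ) :
      Function.update x d j + Pi.single d 1 = Function.update x d (j + 1) := by
    ext i
    obtain rfl | hid := eq_or_ne i d <;> simp [*]
  simp only [hstep]
  rw [Finset.sum_range_sub fun j ↦ η (H.erase d) (Function.update x d j), ← hxd,
    Function.update_eq_self]

lemma sum_cupCochain_eq_one [CharP R 2] {N : ℕ} {s : ι → (ι → ℕ) → R}
    (h0 : ∀ i x, x i = 0 → s i x = 0) (h1 : ∀ i x, x i = N → s i x = 1) {l : List ι}
    (hl : l.Nodup) {t : ι → Finset ℕ} (ht : ∀ d ∈ l, t d = Finset.range N)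
    (ht' : ∀ d ∉ l, (t d).card = 1) :
    ∑ x ∈ Fintype.piFinset t, cupCochain (l.map s) l.toFinset x = 1 := by
  induction l generalizing t with
  | nil => simp [cupCochain, Fintype.card_piFinset, ht']
  | cons d l ih =>
    obtain ⟨hdl, hl⟩ := List.nodup_cons.1 hl
    rw [List.map_cons, cupCochain, sum_piFinset_cubicalCoboundary _ (N := N) (by simpa using ht),
      Finset.sum_eq_single_of_mem d (by simp)]
    · have htop : ∀ x ∈ Fintype.piFinset (Function.update t d {0}),
          s d (Function.update x d N) * cupCochain (l.map s) l.toFinset (Function.update x d N) -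
            s d x * cupCochain (l.map s) l.toFinset x =
          cupCochain (l.map s) l.toFinset (Function.update x d N) := by
        intro x hx
        rw [h1 d _ (by simp), h0 d x (by simpa using Fintype.mem_piFinset.1 hx d), one_mul,
          zero_mul, sub_zero]
      have herase : (d :: l).toFinset.erase d = l.toFinset := by simp [hdl]
      have hslice := sum_piFinset_eq_sum_update (Function.update t d {N}) d 0
        (cupCochain (l.map s) l.toFinset)
      simp only [Function.update_idem, Function.update_self, Finset.sum_singleton] at hslice
      rw [herase, Finset.sum_congr rfl htop, ← hslice, ih hl] <;> grind
    · intro e he hed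
      have hel : s e ∈ l.map s := List.mem_map_of_mem (by simpa [hed] using he)
      refine Finset.sum_eq_zero fun x hx ↦ ?_
      have hxe : x e = 0 := by simpa using Fintype.mem_piFinset.1 hx e
      rw [cupCochain_eq_zero_of_notMem hel (Finset.notMem_erase e _) (by simpa using h1 e),
        cupCochain_eq_zero_of_notMem hel (Finset.notMem_erase e _) (by simpa [hxe] using h0 e),
        mul_zero, mul_zero, sub_zero]

end CubicalCochains

lemma exists_forall_Icc_inter_nonempty {ι : Type*} [Finite ι] {N : ℕ} {S : ι → Set (ι → ℕ)}
    (h0 : ∀ i x, x i = 0 → x ∉ S i) (h1 : ∀ i x, x i = N → x ∈ S i) :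
    ∃ x : ι → ℕ, (∀ i, x i < N) ∧
      ∀ i, (Set.Icc x (x + 1) ∩ S i).Nonempty ∧ (Set.Icc x (x + 1) \ S i).Nonempty := by
  classical
  cases nonempty_fintype ι
  let s (i : ι) : (ι → ℕ) → ZMod 2 := (S i).indicator 1
  have hsum : ∑ x ∈ Fintype.piFinset fun _ ↦ Finset.range N,
      cupCochain (Finset.univ.toList.map s) Finset.univ.toList.toFinset x = 1 :=
    sum_cupCochain_eq_one (fun i x hx ↦ Set.indicator_of_notMem (h0 i x hx) _)
      (fun i x hx ↦ Set.indicator_of_mem (h1 i x hx) _) (Finset.nodup_toList _)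
      (fun _ _ ↦ rfl) (by simp)
  obtain ⟨x, hx, hne⟩ := Finset.exists_ne_zero_of_sum_ne_zero (hsum.trans_ne one_ne_zero)
  rw [Finset.toList_toFinset] at hne
  have hcell : x + 1 = x + ∑ i, Pi.single i 1 := by rw [← Finset.univ_sum_single 1]; rfl
  have hmem (i : ι) : s i ∈ Finset.univ.toList.map s := List.mem_map_of_mem (by simp)
  refine ⟨x, by simpa using hx, fun i ↦ ⟨?_, ?_⟩⟩
  · by_contra! hS
    refine hne (cupCochain_eq_zero_of_forall_mem_Icc (hmem i) (a := 0) fun y hy ↦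
      Set.indicator_of_notMem (fun hyS ↦ ?_) _)
    exact (hS ▸ ⟨hcell ▸ hy, hyS⟩ : y ∈ (∅ : Set (ι → ℕ)))
  · by_contra! hS
    exact hne (cupCochain_eq_zero_of_forall_mem_Icc (hmem i) (a := 1) fun y hy ↦
      Set.indicator_of_mem (Set.sdiff_eq_empty.1 hS (hcell ▸ hy)) _)

/-- The point of the unit cube with coordinates `y i / N`, cut off at `1`. -/
noncomputable def gridPoint {ι : Type*} (N : ℕ) (y : ι → ℕ) (i : ι) : unitInterval :=
  Set.projIcc 0 1 zero_le_one (y i / N)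

lemma dist_gridPoint_le {ι : Type*} [Fintype ι] (N : ℕ) {x y : ι → ℕ}
    (hy : y ∈ Set.Icc x (x + 1)) : dist (gridPoint N y) (gridPoint N x) ≤ 1 / N := by
  refine (dist_pi_le_iff (by positivity)).2 fun i ↦ (Set.abs_projIcc_sub_projIcc _).trans ?_
  have hle : (x i : ℝ) ≤ y i := by exact_mod_cast hy.1 i
  have hle' : (y i : ℝ) ≤ x i + 1 := by exact_mod_cast hy.2 i
  rw [← sub_div, abs_of_nonneg (div_nonneg (sub_nonneg.2 hle) N.cast_nonneg)]
  gcongr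
  linarith

section PoincareMiranda

variable {ι : Type*} [Finite ι] {g : (ι → unitInterval) → ι → ℝ}

lemma exists_forall_abs_lt_of_nonpos_of_nonneg (hg : Continuous g)
    (h0 : ∀ x i, x i = 0 → g x i ≤ 0) (h1 : ∀ x i, x i = 1 → 0 ≤ g x i) {ε : ℝ} (hε : 0 < ε) :
    ∃ x, ∀ i, |g x i| < ε := by
  cases nonempty_fintype ι
  obtain ⟨δ, hδ, hgδ⟩ := Metric.uniformContinuous_iff.1
    (CompactSpace.uniformContinuous_of_continuous hg) ε hε
  obtain ⟨N, hN⟩ := exists_nat_one_div_lt hδ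
  obtain ⟨x, -, hx⟩ := exists_forall_Icc_inter_nonempty (N := N + 1)
    (S := fun i ↦ {y : ι → ℕ | y i ≠ 0 ∧ 0 ≤ g (gridPoint (N + 1) y) i})
    (fun i y hy hyS ↦ hyS.1 hy)
    (fun i y hy ↦ ⟨by simp [hy], h1 _ i (by simp [gridPoint, hy, N.cast_add_one_ne_zero])⟩)
  have hclose : ∀ y ∈ Set.Icc x (x + 1), ∀ i,
      |g (gridPoint (N + 1) y) i - g (gridPoint (N + 1) x) i| < ε := fun y hy i ↦
    (dist_le_pi_dist _ _ i).trans_lt <|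
      hgδ ((dist_gridPoint_le (N + 1) hy).trans_lt (by exact_mod_cast hN))
  refine ⟨gridPoint (N + 1) x, fun i ↦ ?_⟩
  obtain ⟨⟨y, hy, -, hgy⟩, z, hz, hzS⟩ := hx i
  have hgz : g (gridPoint (N + 1) z) i ≤ 0 := by
    by_cases hzi : z i = 0
    · exact h0 _ i (by simp [gridPoint, hzi])
    · exact (not_le.1 fun h ↦ hzS ⟨hzi, h⟩).le
  have hyx := abs_lt.1 (hclose y hy i)
  have hzx := abs_lt.1 (hclose z hz i)
  exact abs_lt.2 ⟨by linarith, by linarith⟩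

/-- The **Poincaré–Miranda theorem**. -/
theorem exists_eq_zero_of_nonpos_of_nonneg (hg : Continuous g)
    (h0 : ∀ x i, x i = 0 → g x i ≤ 0) (h1 : ∀ x i, x i = 1 → 0 ≤ g x i) : ∃ x, g x = 0 := by
  cases nonempty_fintype ι
  obtain ⟨x₀, -, hx₀⟩ := isCompact_univ.exists_isMinOn Set.univ_nonempty hg.norm.continuousOn
  refine ⟨x₀, by_contra fun hne ↦ ?_⟩
  have hpos : 0 < ‖g x₀‖ := norm_pos_iff.2 hne
  obtain ⟨x, hx⟩ := exists_forall_abs_lt_of_nonpos_of_nonneg hg h0 h1 hpos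
  exact (hx₀ (Set.mem_univ x)).not_gt ((pi_norm_lt_iff hpos).2 hx)

end PoincareMiranda

lemma exists_forall_exists_apply_eq {ι κ : Type*} [Finite ι] {f : κ → (ι → unitInterval) → ℝ}
    (hf : ∀ j, Continuous (f j)) (t : ι → ℝ) (J : ι → Finset κ)
    (h0 : ∀ x i, x i = 0 → ∀ j ∈ J i, f j x ≤ t i)
    (h1 : ∀ x i, x i = 1 → ∃ j ∈ J i, t i ≤ f j x) : ∃ x, ∀ i, ∃ j ∈ J i, f j x = t i := by
  have hJ (i : ι) : (J i).Nonempty := (h1 1 i rfl).imp fun _ h ↦ h.1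
  obtain ⟨x, hx⟩ := exists_eq_zero_of_nonpos_of_nonneg
    (g := fun x i ↦ (J i).sup' (hJ i) fun j ↦ f j x - t i)
    (continuous_pi fun i ↦ Continuous.finset_sup'_apply _ fun j _ ↦ (hf j).sub continuous_const)
    (fun x i hxi ↦ by simpa [Finset.sup'_le_iff] using h0 x i hxi)
    (fun x i hxi ↦ by simpa [Finset.le_sup'_iff] using h1 x i hxi)
  refine ⟨x, fun i ↦ ?_⟩
  obtain ⟨j, hj, hji⟩ := Finset.exists_mem_eq_sup' (hJ i) fun j ↦ f j x - t i
  exact ⟨j, hj, sub_eq_zero.1 (hji.symm.trans (congrFun hx i))⟩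

/-- **Lebesgue's covering theorem**. -/
theorem exists_card_lt_ncard_of_forall_ne_one {ι κ : Type*} [Finite ι] [Finite κ]
    {V : κ → Set (ι → unitInterval)} (hV : ∀ j, IsOpen (V j)) (hcov : ⋃ j, V j = Set.univ)
    (hface : ∀ j i, ∀ x ∈ V j, ∀ y ∈ V j, x i = 0 → y i ≠ 1) :
    ∃ x, Nat.card ι < {j | x ∈ V j}.ncard := by
  classical
  cases nonempty_fintype κ
  obtain ⟨f, hfV⟩ := BumpCovering.exists_isSubordinate_of_locallyFinite isClosed_univ V hV
    (locallyFinite_of_finite V) hcov.ge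
  have hf0 {j : κ} {x : ι → unitInterval} (hx : x ∉ V j) : f j x = 0 :=
    image_eq_zero_of_notMem_tsupport fun h ↦ hx (hfV j h)
  have hf1 (x : ι → unitInterval) : ∃ j, f j x = 1 := ⟨_, f.ind_apply x trivial⟩
  have : Infinite (Set.Ioo (0 : ℝ) 1) := Set.Ioo.infinite one_pos
  -- Distinct thresholds force the members of the cover selected for different `i` to be distinct.
  let t : ι ↪ Set.Ioo (0 : ℝ) 1 :=
    (Finite.equivFin ι).toEmbedding.trans (Fin.valEmbedding.trans (Infinite.natEmbedding _))
  obtain ⟨x, hx⟩ := exists_forall_exists_apply_eq (fun j ↦ (f j).continuous) (fun i ↦ t i)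
    (fun i ↦ {j | ∃ y ∈ V j, y i = 1})
    (fun x i hxi j hj ↦ by
      obtain ⟨y, hy, hyi⟩ : ∃ y ∈ V j, y i = 1 := by simpa using hj
      exact (hf0 fun hxV ↦ hface j i x hxV y hy hxi hyi).trans_le (t i).2.1.le)
    (fun x i hxi ↦ by
      obtain ⟨j, hj⟩ := hf1 x
      have hxV : x ∈ V j := by_contra fun h ↦ one_ne_zero (hj.symm.trans (hf0 h))
      exact ⟨j, by simpa using ⟨x, hxV, hxi⟩, (t i).2.2.le.trans_eq hj.symm⟩)
  choose σ _ hσ using hx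
  obtain ⟨j₀, hj₀⟩ := hf1 x
  have hσinj : Function.Injective σ := fun i k hik ↦
    t.injective (Subtype.ext (by rw [← hσ, ← hσ, hik]))
  have hj₀σ : j₀ ∉ Set.range σ := by
    rintro ⟨i, rfl⟩
    exact (t i).2.2.ne ((hσ i).symm.trans hj₀)
  have hsub : insert j₀ (Set.range σ) ⊆ {j | x ∈ V j} := by
    rintro j (rfl | ⟨i, rfl⟩) <;> refine by_contra fun hxV ↦ ?_
    · exact one_ne_zero (hj₀.symm.trans (hf0 hxV))
    · exact (t i).2.1.ne ((hf0 hxV).symm.trans (hσ i))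
  refine ⟨x, ?_⟩
  calc Nat.card ι < (insert j₀ (Set.range σ)).ncard := by
        rw [Set.ncard_insert_of_notMem hj₀σ, Set.ncard_range_of_injective hσinj]
        exact Nat.lt_succ_self _
    _ ≤ {j | x ∈ V j}.ncard := Set.ncard_le_ncard hsub

section CovDim

variable {X Y : Type*} [TopologicalSpace X] [TopologicalSpace Y] {n : ℕ}

lemma CovDimLE.exists_shrinking (h : CovDimLE X n) {κ : Type*} [Finite κ] {U : κ → Set X}
    (hU : ∀ j, IsOpen (U j)) (hcov : ⋃ j, U j = Set.univ) :
    ∃ V : κ → Set X, (∀ j, IsOpen (V j) ∧ V j ⊆ U j) ∧ ⋃ j, V j = Set.univ ∧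
      ∀ x, {j | x ∈ V j}.ncard ≤ n + 1 := by
  let e := Finite.equivFin κ
  obtain ⟨V, hV, hVcov, hVn⟩ := h _ (U ∘ e.symm) (fun k ↦ hU _)
    ((e.symm.surjective.iUnion_comp U).trans hcov)
  refine ⟨V ∘ e, fun j ↦ by simpa using hV (e j), (e.surjective.iUnion_comp V).trans hVcov,
    fun x ↦ ?_⟩
  exact (Set.ncard_le_ncard_of_injOn e (fun _ h ↦ h) e.injective.injOn).trans (hVn x)

lemma CovDimLE.of_isClosedEmbedding {f : Y → X} (hf : Topology.IsClosedEmbedding f)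
    (h : CovDimLE X n) : CovDimLE Y n := by
  intro m U hU hcov
  choose W hW hWU using fun i ↦ hf.isInducing.isOpen_iff.1 (hU i)
  obtain ⟨V, hV, hVcov, hVn⟩ := h.exists_shrinking
    (U := fun i : Option (Fin m) ↦ i.elim (Set.range f)ᶜ W)
    (by rintro (_ | i); exacts [hf.isClosed_range.isOpen_compl, hW i]) (by
      refine Set.eq_univ_of_forall fun x ↦ Set.mem_iUnion.2 ?_
      by_cases hx : x ∈ Set.range f
      · obtain ⟨y, rfl⟩ := hx
        obtain ⟨i, hi⟩ := Set.mem_iUnion.1 (hcov ▸ Set.mem_univ y)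
        exact ⟨some i, show y ∈ f ⁻¹' W i from (hWU i).symm ▸ hi⟩
      · exact ⟨none, hx⟩)
  refine ⟨fun i ↦ f ⁻¹' V (some i), fun i ↦ ⟨(hV _).1.preimage hf.continuous, ?_⟩, ?_,
    fun y ↦ ?_⟩
  · rw [← hWU i]
    exact Set.preimage_mono (hV (some i)).2
  · refine Set.eq_univ_of_forall fun y ↦ ?_
    obtain ⟨_ | i, hi⟩ := Set.mem_iUnion.1 (hVcov ▸ Set.mem_univ (f y))
    · exact absurd ⟨y, rfl⟩ ((hV none).2 hi)
    · exact Set.mem_iUnion.2 ⟨i, hi⟩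
  · exact (Set.ncard_le_ncard_of_injOn some (fun _ h ↦ h) (Option.some_injective _).injOn).trans
      (hVn (f y))

lemma HasCovDim.of_isClosedEmbedding {f : Y → X} (hf : Topology.IsClosedEmbedding f)
    (hX : CovDimLE X n) (hY : HasCovDim Y n) : HasCovDim X n :=
  ⟨hX, fun _ hm ↦ hY.2 _ (hm.of_isClosedEmbedding hf)⟩

lemma CovDimLE.of_leftInverse {r : X → Y} {s : Y → X} (hr : Continuous r) (hs : Continuous s)
    (hiso : ∀ x ∉ Set.range s, IsOpen {x}) (hrs : Function.LeftInverse r s)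
    (h : CovDimLE Y n) : CovDimLE X n := by
  intro m U hU hcov
  obtain ⟨V, hV, hVcov, hVn⟩ := h m (fun i ↦ s ⁻¹' U i) (fun i ↦ (hU i).preimage hs)
    (by rw [← Set.preimage_iUnion, hcov, Set.preimage_univ])
  choose a ha using fun x ↦ Set.mem_iUnion.1 (hcov ▸ Set.mem_univ x : x ∈ ⋃ i, U i)
  let W (i : Fin m) : Set X := r ⁻¹' V i ∩ U i
  have hWs : Set.range s ⊆ ⋃ i, W i := by
    rintro _ ⟨y, rfl⟩
    obtain ⟨i, hi⟩ := Set.mem_iUnion.1 (hVcov ▸ Set.mem_univ y)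
    exact Set.mem_iUnion.2 ⟨i, show r (s y) ∈ V i by rwa [hrs y], (hV i).2 hi⟩
  -- The points missed by `W` are isolated, so each may be added to any member of `U` containing it.
  refine ⟨fun i ↦ W i ∪ {x | x ∉ ⋃ i, W i ∧ a x = i}, fun i ↦ ⟨?_, ?_⟩, ?_, fun x ↦ ?_⟩
  · refine (((hV i).1.preimage hr).inter (hU i)).union (isOpen_iff_mem_nhds.2 fun x hx ↦ ?_)
    exact Filter.mem_of_superset ((hiso x fun h ↦ hx.1 (hWs h)).mem_nhds rfl)
      (Set.singleton_subset_iff.2 hx)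
  · rintro x (hx | ⟨-, rfl⟩)
    exacts [hx.2, ha x]
  · refine Set.eq_univ_of_forall fun x ↦ Set.mem_iUnion.2 ?_
    by_cases hx : x ∈ ⋃ i, W i
    · exact (Set.mem_iUnion.1 hx).imp fun _ ↦ Or.inl
    · exact ⟨a x, Or.inr ⟨hx, rfl⟩⟩
  · by_cases hx : x ∈ ⋃ i, W i
    · exact (Set.ncard_le_ncard fun i hi ↦ (hi.resolve_right fun h ↦ h.1 hx).1).trans (hVn (r x))
    · refine (Set.ncard_le_ncard (t := {a x}) fun i hi ↦ ?_).trans (by simp)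
      exact (hi.resolve_left fun h ↦ hx (Set.mem_iUnion.2 ⟨i, h⟩)).2.symm

lemma exists_shrinking_of_pairwise_disjoint {ι κ C : Type*} [Finite κ] {U : ι → Set X}
    {Q : κ → C → Set X} (hQ : ∀ k c, IsOpen (Q k c)) (hcov : ∀ x, ∃ k c, x ∈ Q k c)
    (hdisj : ∀ k, Pairwise fun c c' ↦ Disjoint (Q k c) (Q k c'))
    (hQU : ∀ k c, (Q k c).Nonempty → ∃ i, Q k c ⊆ U i) :
    ∃ V : ι → Set X, (∀ i, IsOpen (V i) ∧ V i ⊆ U i) ∧ ⋃ i, V i = Set.univ ∧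
      ∀ x, {i | x ∈ V i}.ncard ≤ Nat.card κ := by
  choose r hr using hQU
  refine ⟨fun i ↦ ⋃ (k) (c) (h : (Q k c).Nonempty) (_ : r k c h = i), Q k c,
    fun i ↦ ⟨?_, ?_⟩, ?_, fun x ↦ ?_⟩
  · exact isOpen_iUnion fun k ↦ isOpen_iUnion fun c ↦ isOpen_iUnion fun _ ↦
      isOpen_iUnion fun _ ↦ hQ k c
  · simp only [Set.iUnion_subset_iff]
    rintro k c h rfl
    exact hr k c h
  · refine Set.eq_univ_of_forall fun x ↦ ?_
    obtain ⟨k, c, hx⟩ := hcov x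
    simp only [Set.mem_iUnion]
    exact ⟨_, k, c, ⟨x, hx⟩, rfl, hx⟩
  · simp only [Set.mem_iUnion, exists_prop]
    choose k c hne hrk hx using
      fun i : {i | ∃ k c, ∃ h : (Q k c).Nonempty, r k c h = i ∧ x ∈ Q k c} ↦ i.2
    refine Nat.card_le_card_of_injective k fun i j hij ↦ Subtype.ext ?_
    have hc : c i = c j := by_contra fun h ↦
      Set.disjoint_left.1 (hdisj (k i) h) (hx i) (hij ▸ hx j)
    rw [← hrk i, ← hrk j]
    congr 1

lemma IsZeroDim.covDimLE_zero [CompactSpace X] [T2Space X] (h : IsZeroDim X) :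
    CovDimLE X 0 := by
  obtain ⟨B, hB, hbasis⟩ := h
  have : TotallySeparatedSpace X := totallySeparatedSpace_of_t0_of_basis_clopen <|
    hbasis.of_isOpen_of_subset (fun _ h ↦ h.isOpen) hB
  intro m U hU hcov
  obtain ⟨k, W, hWU, hWcov, hW⟩ :=
    TopologicalSpace.IsOpenCover.exists_finite_nonempty_disjoint_clopen_cover
      (U := fun i ↦ ⟨U i, hU i⟩) (TopologicalSpace.IsOpenCover.mk (by ext; simp [hcov]))
  simpa using exists_shrinking_of_pairwise_disjoint (Q := fun (_ : Unit) j ↦ (W j : Set X))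
    (fun _ j ↦ (W j).isOpen) (fun x ↦ by simpa using hWcov (Set.mem_univ x))
    (fun _ i j hij ↦ TopologicalSpace.Clopens.coe_disjoint.2 (hW hij)) (fun _ j _ ↦ (hWU j).2)

end CovDim

section Grid

variable {n : ℕ}

/-- The open cell of side `1 / N` with index `c` in the grid of `ℝⁿ` whose hyperplanes
`N * x i = c i` are shifted by `k / (n + 1)` after scaling. -/
def gridCell (N : ℝ) (k : Fin (n + 1)) (c : Fin n → ℤ) : Set (Fin n → ℝ) :=
  {x | ∀ i, N * x i - k / (n + 1) ∈ Set.Ioo (c i : ℝ) (c i + 1)}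

lemma isOpen_gridCell (N : ℝ) (k : Fin (n + 1)) (c : Fin n → ℤ) : IsOpen (gridCell N k c) := by
  simp only [gridCell, Set.ofPred_forall]
  exact isOpen_iInter_of_finite fun i ↦ isOpen_Ioo.preimage (by fun_prop)

lemma floor_eq_of_mem_gridCell {N : ℝ} {k : Fin (n + 1)} {c : Fin n → ℤ} {x : Fin n → ℝ}
    (hx : x ∈ gridCell N k c) (i : Fin n) : ⌊N * x i - k / (n + 1)⌋ = c i :=
  Int.floor_eq_iff.2 ⟨(hx i).1.le, (hx i).2⟩

lemma pairwise_disjoint_gridCell (N : ℝ) (k : Fin (n + 1)) :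
    Pairwise fun c c' ↦ Disjoint (gridCell N k c) (gridCell N k c') := fun _ _ hne ↦
  Set.disjoint_left.2 fun _ hx hx' ↦ hne <| funext fun i ↦
    (floor_eq_of_mem_gridCell hx i).symm.trans (floor_eq_of_mem_gridCell hx' i)

lemma dist_lt_of_mem_gridCell {N : ℝ} (hN : 0 < N) {k : Fin (n + 1)} {c : Fin n → ℤ}
    {x y : Fin n → ℝ} (hx : x ∈ gridCell N k c) (hy : y ∈ gridCell N k c) :
    dist x y < 1 / N := by
  refine (dist_pi_lt_iff (by positivity)).2 fun i ↦ ?_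
  obtain ⟨hxl, hxu⟩ := hx i
  obtain ⟨hyl, hyu⟩ := hy i
  rw [Real.dist_eq, abs_lt, ← neg_div, div_lt_iff₀ hN, lt_div_iff₀ hN]
  constructor <;> linarith

/-- Pigeonhole: each of the `n` numbers excludes at most one of the `n + 1` shifts. -/
lemma exists_forall_sub_div_ne_intCast (a : Fin n → ℝ) :
    ∃ k : Fin (n + 1), ∀ i (z : ℤ), a i - k / (n + 1) ≠ z := by
  by_contra! h
  choose i z hz using h
  obtain ⟨k, k', hkk', hii⟩ := Fintype.exists_ne_map_eq_of_card_lt i (by simp)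
  have hdiff : (z k - z k') * ((n : ℤ) + 1) = (k' : ℤ) - k := by
    have h : ((z k - z k' : ℤ) : ℝ) * (n + 1) = k' - k := by
      have hn : (n : ℝ) + 1 ≠ 0 := by positivity
      push_cast
      rw [← hz k, ← hz k', hii]
      field_simp
      ring
    exact_mod_cast h
  have hzero : (k' : ℤ) - k = 0 :=
    Int.eq_zero_of_abs_lt_dvd (Dvd.intro_left _ hdiff)
      (abs_sub_lt_of_nonneg_of_lt (by positivity) (mod_cast k'.2) (by positivity) (mod_cast k.2))
  exact hkk' (Fin.ext (by omega))

lemma exists_mem_gridCell (N : ℝ) (x : Fin n → ℝ) : ∃ k c, x ∈ gridCell N k c := by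
  obtain ⟨k, hk⟩ := exists_forall_sub_div_ne_intCast fun i ↦ N * x i
  exact ⟨k, fun i ↦ ⌊N * x i - k / (n + 1)⌋, fun i ↦
    ⟨(Int.floor_le _).lt_of_ne (hk i _).symm, Int.lt_floor_add_one _⟩⟩

lemma covDimLE_of_isInducing {X : Type*} [TopologicalSpace X] [CompactSpace X]
    {f : X → Fin n → ℝ} (hf : Topology.IsInducing f) : CovDimLE X n := by
  let := hf.comapPseudoMetricSpace
  intro m U hU hcov
  obtain ⟨δ, hδ, hball⟩ := lebesgue_number_lemma_of_metric isCompact_univ hU hcov.ge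
  obtain ⟨N, hN⟩ := exists_nat_one_div_lt hδ
  simpa using exists_shrinking_of_pairwise_disjoint
    (Q := fun k c ↦ f ⁻¹' gridCell (N + 1) k c)
    (fun k c ↦ (isOpen_gridCell _ k c).preimage hf.continuous)
    (fun x ↦ exists_mem_gridCell _ (f x))
    (fun k c c' hne ↦ (pairwise_disjoint_gridCell _ k hne).preimage f)
    (fun k c ⟨x, hx⟩ ↦ (hball x trivial).imp fun i hi y hy ↦
      hi ((dist_lt_of_mem_gridCell (by positivity) hy hx).trans hN))

end Grid

section Cube

variable {n : ℕ}

lemma covDimLE_cube (n : ℕ) : CovDimLE (Cube n) n :=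
  covDimLE_of_isInducing (f := fun x i ↦ (x i : ℝ)) (.piMap fun _ ↦ .subtypeVal)

lemma le_of_covDimLE_cube {m : ℕ} (h : CovDimLE (Cube n) m) : n ≤ m := by
  let U (b : Fin n → Bool) : Set (Cube n) := {x | ∀ i, x i ≠ if b i then 0 else 1}
  have hU (b : Fin n → Bool) : IsOpen (U b) := by
    simp only [U, Set.ofPred_forall]
    exact isOpen_iInter_of_finite fun i ↦ isOpen_ne_fun (continuous_apply i) continuous_const
  have hcov : ⋃ b, U b = Set.univ := by
    classical
    refine Set.eq_univ_of_forall fun x ↦ Set.mem_iUnion.2 ⟨fun i ↦ decide (x i ≠ 0), fun i ↦ ?_⟩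
    by_cases hx : x i = 0 <;> simp [hx]
  obtain ⟨V, hV, hVcov, hVm⟩ := h.exists_shrinking hU hcov
  obtain ⟨x, hx⟩ := exists_card_lt_ncard_of_forall_ne_one (fun b ↦ (hV b).1) hVcov
    fun b i x hx y hy hx0 hy1 ↦ by
      have hxU := (hV b).2 hx i
      have hyU := (hV b).2 hy i
      cases hb : b i <;> simp_all
  simpa using hx.trans_le (hVm x)

lemma hasCovDim_cube (n : ℕ) : HasCovDim (Cube n) n :=
  ⟨covDimLE_cube n, fun _ ↦ le_of_covDimLE_cube⟩

lemma exists_isClosedEmbedding_cube {U : Set (Cube n)} (hU : IsOpen U) (hne : U.Nonempty) :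
    ∃ φ : Cube n → Cube n, Topology.IsClosedEmbedding φ ∧ Set.range φ ⊆ U := by
  obtain ⟨p, hp⟩ := hne
  obtain ⟨ε, hε, hball⟩ := Metric.isOpen_iff.1 hU p hp
  obtain ⟨t, ht0, ht⟩ : ∃ t, 0 < t ∧ t < min ε 1 := exists_between (lt_min hε one_pos)
  obtain ⟨htε, ht1⟩ := lt_min_iff.1 ht
  let φ (y : Cube n) (i : Fin n) : Set.Icc (0 : ℝ) 1 :=
    ⟨(1 - t) * p i + t * y i,
      convex_Icc (0 : ℝ) 1 (p i).2 (y i).2 (by linarith) ht0.le (by ring)⟩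
  have hφinj : Function.Injective φ := fun y z h ↦ funext fun i ↦ Subtype.ext <| by
    simpa [φ, ht0.ne'] using congrArg Subtype.val (congrFun h i)
  refine ⟨φ, Continuous.isClosedEmbedding (by fun_prop) hφinj, ?_⟩
  rintro _ ⟨y, rfl⟩
  refine hball ((dist_pi_lt_iff hε).2 fun i ↦ lt_of_le_of_lt ?_ htε)
  obtain ⟨hp0, hp1⟩ := (p i).2
  obtain ⟨hy0, hy1⟩ := (y i).2
  rw [Subtype.dist_eq, Real.dist_eq, abs_le]
  constructor <;> nlinarith

lemma exists_isClosed_hasCovDim_of_isOpen_cube {U : Set (Cube n)} (hU : IsOpen U)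
    (hne : U.Nonempty) : ∃ C ⊆ U, IsClosed C ∧ HasCovDim C n := by
  obtain ⟨φ, hφ, hφU⟩ := exists_isClosedEmbedding_cube hU hne
  have hC := hφ.isClosed_range
  exact ⟨Set.range φ, hφU, hC,
    .of_isClosedEmbedding hφ.isEmbedding.toHomeomorph.isClosedEmbedding
      ((covDimLE_cube n).of_isClosedEmbedding hC.isClosedEmbedding_subtypeVal) (hasCovDim_cube n)⟩

end Cube

section UniformEberlein

variable {K : Type} [TopologicalSpace K]

/-- The functional `⟪v, ·⟫` is the uniform limit on bounded sets of the functionals `⟪w, ·⟫`,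
`w` a finitely supported truncation of `v`. -/
lemma continuous_toWeakSpace_of_bounded {Z Γ : Type*} [TopologicalSpace Z]
    {F : Z → lp (fun _ : Γ ↦ ℝ) 2} {R : ℝ} (hR : ∀ z, ‖F z‖ ≤ R)
    (hF : ∀ c, Continuous fun z ↦ F z c) :
    Continuous fun z ↦ toWeakSpace ℝ (lp (fun _ : Γ ↦ ℝ) 2) (F z) := by
  classical
  refine WeakBilin.continuous_of_continuous_eval _ fun φ ↦ ?_
  change Continuous fun z ↦ φ (F z)
  obtain ⟨v, rfl⟩ := (InnerProductSpace.toDual ℝ (lp (fun _ : Γ ↦ ℝ) 2)).surjective φ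
  simp only [InnerProductSpace.toDual_apply_apply]
  refine continuous_of_uniform_approx_of_continuous fun u hu ↦ ?_
  obtain ⟨ε, hε, hu⟩ := Metric.mem_uniformity_dist.1 hu
  have hR' : 0 < |R| + 1 := by positivity
  obtain ⟨S, hS⟩ := (Metric.tendsto_nhds.1 (lp.hasSum_single ENNReal.ofNat_ne_top v) _
    (div_pos hε hR')).exists
  refine ⟨fun z ↦ inner ℝ (∑ c ∈ S, lp.single 2 c (v c)) (F z), ?_, fun z ↦ hu ?_⟩
  · simp only [sum_inner, lp.inner_single_left]
    exact continuous_finsetSum _ fun c _ ↦ continuous_const.inner (hF c)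
  · rw [dist_comm, dist_eq_norm, lt_div_iff₀ hR'] at hS
    rw [Real.dist_eq, ← inner_sub_left, ← Real.norm_eq_abs]
    refine (norm_inner_le_norm _ _).trans_lt (lt_of_le_of_lt ?_ hS)
    gcongr
    linarith [hR z, le_abs_self R]

lemma isUniformEberlein_of_continuous_injective [CompactSpace K] {E : Type}
    [NormedAddCommGroup E] [InnerProductSpace ℝ E] [CompleteSpace E] {f : K → WeakSpace ℝ E}
    (hf : Continuous f) (hinj : Function.Injective f) : IsUniformEberlein K := by
  obtain ⟨w, b, -⟩ := exists_hilbertBasis ℝ E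
  let e : WeakSpace ℝ E →L[ℝ] WeakSpace ℝ (lp (fun _ : w ↦ ℝ) 2) :=
    WeakSpace.map (b.repr : E →L[ℝ] lp (fun _ : w ↦ ℝ) 2)
  have he : Function.Injective e := b.repr.injective
  exact ⟨inferInstance, w, e ∘ f,
    ((e.continuous.comp hf).isClosedEmbedding (he.comp hinj)).isEmbedding⟩

lemma isUniformEberlein_of_metrizableSpace [CompactSpace K] [TopologicalSpace.MetrizableSpace K] :
    IsUniformEberlein K := by
  let := TopologicalSpace.metrizableSpaceMetric K
  obtain ⟨F, hF⟩ := Metric.PiNatEmbed.exists_embedding_to_hilbert_cube (X := K)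
  let g (x : K) (k : ℕ) : ℝ := (1 / 2) ^ k * F x k
  have hpow : Memℓp (fun k : ℕ ↦ (1 / 2 : ℝ) ^ k) 2 :=
    (memℓp_gen (by simpa using summable_geometric_two)).of_exponent_ge one_le_two
  have hgle (x : K) (k : ℕ) : ‖g x k‖ ≤ (1 / 2) ^ k := by
    rw [Real.norm_of_nonneg (mul_nonneg (by positivity) (F x k).2.1)]
    exact mul_le_of_le_one_right (by positivity) (F x k).2.2
  let G (x : K) : lp (fun _ : ℕ ↦ ℝ) 2 := ⟨g x, hpow.mono (hgle x)⟩
  have hG (x : K) : ‖G x‖ ≤ ‖(⟨_, hpow⟩ : lp (fun _ : ℕ ↦ ℝ) 2)‖ :=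
    lp.norm_mono (by norm_num) fun k ↦ (hgle x k).trans (le_abs_self _)
  have hGc (k : ℕ) : Continuous fun x ↦ G x k :=
    continuous_const.mul (continuous_subtype_val.comp ((continuous_apply k).comp hF.continuous))
  refine isUniformEberlein_of_continuous_injective (continuous_toWeakSpace_of_bounded hG hGc)
    fun x y h ↦ hF.injective (funext fun k ↦ Subtype.ext ?_)
  have hgxy : g x k = g y k := congrArg (fun v : lp (fun _ : ℕ ↦ ℝ) 2 ↦ v k) h
  simpa [g] using hgxy

end UniformEberlein

section PartialDuplicate

/-- The Aleksandrov duplicate of `M` with the isolated points `(x, 1)`, `x ∉ X`, removed: the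
point `(y, 0)` is encoded as `y` paired with the zero function, and `(x, 1)` as `x` paired with
the indicator function of `{x}`, so that the topology is that of a subspace of a product. -/
def partialDuplicate {M : Type*} (X : Set M) : Set (M × (X → Bool)) :=
  {p | ∀ x, p.2 x = true → p.1 = x}

namespace partialDuplicate

variable {M : Type*} {X : Set M}

/-- The point `(y, 0)` of the duplicate. -/
def base (y : M) : partialDuplicate X :=
  ⟨(y, fun _ ↦ false), fun _ h ↦ absurd h Bool.false_ne_true⟩

open Classical in
/-- The point `(x, 1)` of the duplicate. -/
noncomputable def iso (x : X) : partialDuplicate X :=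
  ⟨(x, fun y ↦ decide (y = x)), fun _ h ↦ congrArg Subtype.val (of_decide_eq_true h).symm⟩

lemma base_injective : Function.Injective (base : M → partialDuplicate X) :=
  fun _ _ h ↦ congrArg (fun p ↦ p.1.1) h

lemma iso_injective : Function.Injective (iso : X → partialDuplicate X) :=
  fun _ _ h ↦ Subtype.ext (congrArg (fun p ↦ p.1.1) h)

lemma snd_eq_true_iff {p : partialDuplicate X} {x : X} : p.1.2 x = true ↔ p = iso x := by
  refine ⟨fun h ↦ Subtype.ext (Prod.ext (p.2 x h) (funext fun y ↦ ?_)), ?_⟩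
  · have hy : p.1.2 y = true ↔ y = x :=
      ⟨fun h' ↦ Subtype.ext ((p.2 y h').symm.trans (p.2 x h)), fun hyx ↦ hyx ▸ h⟩
    rw [Bool.eq_iff_iff, hy]
    simp [iso]
  · rintro rfl
    simp [iso]

lemma eq_base_or_eq_iso (p : partialDuplicate X) : p = base p.1.1 ∨ ∃ x, p = iso x := by
  refine or_iff_not_imp_right.2 fun h ↦ Subtype.ext (Prod.ext rfl (funext fun x ↦ ?_))
  exact eq_false_of_ne_true fun hx ↦ h ⟨x, snd_eq_true_iff.1 hx⟩

variable [TopologicalSpace M]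

lemma continuous_base : Continuous (base : M → partialDuplicate X) :=
  Continuous.subtype_mk (by fun_prop) _

lemma isOpen_singleton_iso (x : X) : IsOpen {iso x} := by
  have h : {iso x} = (fun p : partialDuplicate X ↦ p.1.2 x) ⁻¹' {true} :=
    Set.ext fun p ↦ snd_eq_true_iff.symm
  rw [h]
  exact (isOpen_discrete {true}).preimage (by fun_prop)

lemma covDimLE {n : ℕ} (h : CovDimLE M n) : CovDimLE (partialDuplicate X) n := by
  refine h.of_leftInverse (r := fun p ↦ p.1.1) (s := base) (by fun_prop) continuous_base
    (fun p hp ↦ ?_) fun _ ↦ rfl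
  obtain ⟨x, rfl⟩ := (eq_base_or_eq_iso p).resolve_left fun h ↦ hp ⟨_, h.symm⟩
  exact isOpen_singleton_iso x

variable [T1Space M]

lemma isClosed : IsClosed (partialDuplicate X) := by
  simp only [partialDuplicate, Set.ofPred_forall]
  refine isClosed_iInter fun x ↦ isClosed_imp ?_ (isClosed_singleton.preimage continuous_fst)
  exact (isOpen_discrete {true}).preimage
    (by fun_prop : Continuous fun p : M × (X → Bool) ↦ p.2 x)

instance [CompactSpace M] : CompactSpace (partialDuplicate X) :=
  isCompact_iff_compactSpace.1 isClosed.isCompact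

lemma tendsto_iso (y : M) :
    Filter.Tendsto iso (Filter.comap (fun x : X ↦ (x : M)) (nhdsWithin y {y}ᶜ))
      (nhds (base y : partialDuplicate X)) := by
  refine tendsto_subtype_rng.2 (Filter.Tendsto.prodMk_nhds ?_ (tendsto_pi_nhds.2 fun z ↦ ?_))
  · exact Filter.tendsto_comap.mono_right nhdsWithin_le_nhds
  · have hz : ∀ᶠ x in nhdsWithin y {y}ᶜ, x ≠ (z : M) := by
      rcases eq_or_ne y z with rfl | hzy
      · exact eventually_mem_nhdsWithin
      · exact nhdsWithin_le_nhds (isOpen_ne.mem_nhds hzy)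
    refine tendsto_const_nhds.congr' ?_
    filter_upwards [hz.comap (fun x : X ↦ (x : M))] with x hx
    have hzx : z ≠ x := fun h ↦ hx (congrArg _ h.symm)
    simp [hzx]

lemma base_mem_of_accPt {L : Set (partialDuplicate X)} (hL : IsClosed L) {y : M}
    (hy : AccPt y (Filter.principal (Subtype.val '' {x | iso x ∈ L}))) : base y ∈ L := by
  refine hL.mem_of_frequently_of_tendsto (Filter.frequently_comap.2 ?_) (tendsto_iso y)
  exact (accPt_iff_frequently_nhdsNE.1 hy).mono fun _ ⟨x, hx, hxy⟩ ↦ ⟨x, hxy, hx⟩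

end partialDuplicate

namespace partialDuplicate

variable {M : Type} {X : Set M}

open Classical in
/-- The unit vector at `x` for `p = iso x`, and zero for `p = base y`. -/
noncomputable def isoVec (p : partialDuplicate X) : lp (fun _ : X ↦ ℝ) 2 :=
  if h : ∃ x, p = iso x then lp.single 2 h.choose 1 else 0

lemma isoVec_apply (p : partialDuplicate X) (x : X) :
    isoVec p x = if p.1.2 x = true then 1 else 0 := by
  classical
  unfold isoVec
  simp only [snd_eq_true_iff]
  split_ifs with h hx hx
  · have hxx : h.choose = x := iso_injective (h.choose_spec.symm.trans hx)
    simp [hxx]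
  · have hxx : x ≠ h.choose := fun hxx ↦ hx (hxx ▸ h.choose_spec)
    simp [hxx]
  · exact absurd ⟨x, hx⟩ h
  · simp

lemma norm_isoVec_le_one (p : partialDuplicate X) : ‖isoVec p‖ ≤ 1 := by
  classical
  unfold isoVec
  split_ifs
  · rw [lp.norm_single two_pos, norm_one]
  · simp

lemma continuous_toWeakSpace_isoVec [TopologicalSpace M] :
    Continuous fun p : partialDuplicate X ↦ toWeakSpace ℝ _ (isoVec p) := by
  refine continuous_toWeakSpace_of_bounded norm_isoVec_le_one fun x ↦ ?_
  simp only [isoVec_apply]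
  exact (continuous_of_discreteTopology (f := fun b : Bool ↦ if b = true then (1 : ℝ) else 0)).comp
    (by fun_prop : Continuous fun p : partialDuplicate X ↦ p.1.2 x)

lemma isUniformEberlein [TopologicalSpace M] [T1Space M] (hM : IsUniformEberlein M) :
    IsUniformEberlein (partialDuplicate X) := by
  obtain ⟨_, Γ, f, hf⟩ := hM
  let E := lp (fun _ : Γ ↦ ℝ) 2
  let F := lp (fun _ : X ↦ ℝ) 2
  let e : E × F →L[ℝ] WithLp 2 (E × F) := (WithLp.prodContinuousLinearEquiv 2 ℝ E F).symm
  let g (p : partialDuplicate X) : WeakSpace ℝ (WithLp 2 (E × F)) :=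
    WeakSpace.map (e ∘L .inl ℝ E F) (f p.1.1) +
      WeakSpace.map (e ∘L .inr ℝ E F) (toWeakSpace ℝ _ (isoVec p))
  have hfst (p) : f p.1.1 = (g p : WithLp 2 (E × F)).fst := (add_zero _).symm
  have hsnd (p) : isoVec p = (g p : WithLp 2 (E × F)).snd := (zero_add _).symm
  have hg : Continuous g :=
    ((WeakSpace.map _).continuous.comp (hf.continuous.comp (by fun_prop))).add
      ((WeakSpace.map _).continuous.comp continuous_toWeakSpace_isoVec)
  refine isUniformEberlein_of_continuous_injective hg fun p q h ↦ ?_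
  refine Subtype.ext (Prod.ext (hf.injective ?_) (funext fun x ↦ ?_))
  · rw [hfst, hfst, h]
  · have hx : isoVec p x = isoVec q x := by rw [hsnd, hsnd, h]
    cases hp : p.1.2 x <;> cases hq : q.1.2 x <;> simp [isoVec_apply, hp, hq] at hx ⊢

end partialDuplicate

end PartialDuplicate

section Weight

universe u

variable {Z ι : Type u}

lemma tweight_le [TopologicalSpace Z] {B : Set (Set Z)}
    (hB : TopologicalSpace.IsTopologicalBasis B) : tweight Z ≤ Cardinal.mk B :=
  csInf_le' ⟨B, hB, rfl⟩

lemma tweight_le_of_eq_generateFrom [t : TopologicalSpace Z] {S : Set (Set Z)}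
    (hS : t = TopologicalSpace.generateFrom S) :
    tweight Z ≤ max Cardinal.aleph0 (Cardinal.mk S) := by
  refine (tweight_le (TopologicalSpace.isTopologicalBasis_of_subbasis hS)).trans ?_
  have hsub : (fun f ↦ ⋂₀ f) '' {f : Set (Set Z) | f.Finite ∧ f ⊆ S} ⊆
      Set.range fun F : Finset S ↦ ⋂₀ (Subtype.val '' (F : Set S)) := by
    rintro _ ⟨f, ⟨hf, hfS⟩, rfl⟩
    lift f to Set S using hfS
    exact ⟨(hf.of_finite_image Subtype.val_injective.injOn).toFinset, by simp⟩
  refine (Cardinal.mk_le_mk_of_subset hsub).trans (Cardinal.mk_range_le.trans ?_)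
  cases finite_or_infinite S
  · exact (Cardinal.lt_aleph0_of_finite _).le.trans (le_max_left _ _)
  · exact (Cardinal.mk_finset_of_infinite S).le.trans (le_max_right _ _)

lemma tweight_le_of_eq_iInf [tZ : TopologicalSpace Z] {t : ι → TopologicalSpace Z}
    (ht : ∀ i, @SecondCountableTopology Z (t i)) (h : tZ = ⨅ i, t i) :
    tweight Z ≤ max Cardinal.aleph0 (Cardinal.mk ι) := by
  choose B hB hBt using fun i ↦ (ht i).is_open_generated_countable
  refine (tweight_le_of_eq_generateFrom (S := ⋃ i, B i) ?_).trans
    (max_le (le_max_left _ _) ((Cardinal.mk_iUnion_le _).trans ?_))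
  · rw [h, generateFrom_iUnion]
    exact iInf_congr hBt
  · refine (mul_le_mul' le_rfl (ciSup_le' fun i ↦ (hB i).le_aleph0)).trans ?_
    rw [max_comm]
    exact Cardinal.mul_le_max_of_aleph0_le_right le_rfl

lemma mk_le_tweight_of_isOpen_singleton [TopologicalSpace Z] {f : ι → Z}
    (hf : Function.Injective f) (ho : ∀ i, IsOpen {f i}) : Cardinal.mk ι ≤ tweight Z := by
  refine le_csInf ⟨_, _, TopologicalSpace.isTopologicalBasis_opens, rfl⟩ ?_
  rintro _ ⟨B, hB, rfl⟩
  have hmem (i : ι) : {f i} ∈ B := by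
    obtain ⟨v, hv, hiv, hvi⟩ := hB.exists_subset_of_mem_open (Set.mem_singleton (f i)) (ho i)
    rwa [← hvi.antisymm (Set.singleton_subset_iff.2 hiv)]
  exact Cardinal.mk_le_of_injective (f := fun i ↦ (⟨{f i}, hmem i⟩ : B)) fun i j h ↦
    hf (Set.singleton_injective (congrArg Subtype.val h))

namespace partialDuplicate

variable {M : Type u} [TopologicalSpace M] [SecondCountableTopology M] {X : Set M}

lemma tweight_le_of_isInducing [tZ : TopologicalSpace Z] {g : Z → partialDuplicate X}
    (hg : Topology.IsInducing g) :
    tweight Z ≤ max Cardinal.aleph0 (Cardinal.mk {x | iso x ∈ Set.range g}) := by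
  let A : Set X := {x | iso x ∈ Set.range g}
  let t (o : Option X) : TopologicalSpace Z :=
    o.elim (.induced (fun z ↦ (g z).1.1) inferInstance)
      fun x ↦ .induced (fun z ↦ (g z).1.2 x) inferInstance
  have htZ : tZ = t none ⊓ ⨅ x, t (some x) := by
    rw [hg.eq_induced, instTopologicalSpaceSubtype, instTopologicalSpaceProd,
      Pi.topologicalSpace]
    simp only [induced_inf, induced_iInf, induced_compose]
    rfl
  have ht (x : X) (hx : x ∉ A) : t (some x) = ⊤ := by
    have hfalse (z : Z) : (g z).1.2 x = false :=
      eq_false_of_ne_true fun h ↦ hx ⟨z, snd_eq_true_iff.1 h⟩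
    simp only [t, Option.elim_some, hfalse, induced_const]
  have htA : ⨅ x, t (some x) = ⨅ a : A, t (some a) := by
    refine le_antisymm (le_iInf fun a ↦ iInf_le _ a.1) (le_iInf fun x ↦ ?_)
    by_cases hx : x ∈ A
    · exact iInf_le (fun a : A ↦ t (some a)) ⟨x, hx⟩
    · exact (ht x hx).symm ▸ le_top
  refine (tweight_le_of_eq_iInf (t := fun o : Option A ↦ t (o.map (↑))) ?_ ?_).trans ?_
  · rintro (_ | a) <;> exact TopologicalSpace.secondCountableTopology_induced ..
  · rw [iInf_option, htZ, htA]
    rfl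
  · rw [Cardinal.mk_option]
    refine max_le (le_max_left _ _) (Cardinal.add_le_of_le (le_max_left _ _) (le_max_right _ _) ?_)
    exact Cardinal.one_le_aleph0.trans (le_max_left _ _)

lemma tweight_eq_mk (hX : Cardinal.aleph0 ≤ Cardinal.mk X) :
    tweight (partialDuplicate X) = Cardinal.mk X :=
  le_antisymm ((tweight_le_of_isInducing Topology.IsInducing.id).trans
    (max_le hX (Cardinal.mk_set_le _)))
    (mk_le_tweight_of_isOpen_singleton iso_injective isOpen_singleton_iso)

end partialDuplicate

end Weight

section LuzinSets

lemma isZeroDim_of_discreteTopology {Z : Type*} [TopologicalSpace Z] [DiscreteTopology Z] :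
    IsZeroDim Z :=
  ⟨_, fun U _ ↦ isClopen_discrete U, TopologicalSpace.isTopologicalBasis_opens⟩

lemma HasCovDim.not_isZeroDim {Z : Type*} [TopologicalSpace Z] [CompactSpace Z] [T2Space Z] {n : ℕ}
    (h : HasCovDim Z n) (hn : 1 ≤ n) : ¬ IsZeroDim Z :=
  fun hZ ↦ Nat.not_succ_le_zero _ (hn.trans (h.2 0 hZ.covDimLE_zero))

lemma perfectSpace_of_forall_exists_hasCovDim {M : Type*} [TopologicalSpace M] {n : ℕ}
    (hn : 1 ≤ n)
    (hdim : ∀ U : Set M, IsOpen U → U.Nonempty → ∃ C ⊆ U, IsClosed C ∧ HasCovDim C n) :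
    PerfectSpace M := by
  refine perfectSpace_iff_forall_not_isolated.2 fun y ↦ ⟨fun hy ↦ ?_⟩
  obtain ⟨C, hC, -, hCn⟩ := hdim {y} ((isOpen_singleton_iff_punctured_nhds y).2 hy) ⟨y, rfl⟩
  have : Subsingleton C := (Set.subsingleton_singleton.anti hC).coe_sort
  exact hCn.not_isZeroDim hn isZeroDim_of_discreteTopology

namespace partialDuplicate

variable {M : Type} [TopologicalSpace M] [T1Space M] [PerfectSpace M]
  [SecondCountableTopology M] {X : Set M} {κ : Cardinal} {L : Set (partialDuplicate X)}

lemma exists_isOpen_forall_base_mem (hκ : Cardinal.aleph0 < κ)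
    (hX : ∀ A : Set M, IsNowhereDense A → Cardinal.mk ↥(A ∩ X) < κ) (hL : IsClosed L)
    (hκL : κ ≤ tweight L) : ∃ U : Set M, IsOpen U ∧ U.Nonempty ∧ ∀ y ∈ U, base y ∈ L := by
  let A : Set M := Subtype.val '' {x : X | iso x ∈ L}
  have hκA : κ ≤ Cardinal.mk ↥(A ∩ X) := by
    have h := hκL.trans (tweight_le_of_isInducing Topology.IsInducing.subtypeVal)
    rw [Subtype.range_coe] at h
    rw [Set.inter_eq_left.2 (Subtype.coe_image_subset X _),
      Cardinal.mk_image_eq Subtype.val_injective]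
    exact (le_max_iff.1 h).resolve_left hκ.not_ge
  have hA : (interior (closure A)).Nonempty :=
    Set.nonempty_iff_ne_empty.2 fun h ↦ (hX A h).not_ge hκA
  refine ⟨_, isOpen_interior, hA, fun y hy ↦ base_mem_of_accPt hL ?_⟩
  have hacc : y ∈ derivedSet (closure A) :=
    derivedSet_mono _ _ interior_subset (isOpen_interior.preperfect y hy)
  rwa [derivedSet_closure] at hacc

lemma hasCovDim_of_forall_base_mem {M : Type*} [TopologicalSpace M] [CompactSpace M] [T2Space M]
    {X : Set M} {L : Set (partialDuplicate X)} {n : ℕ} (hM : CovDimLE M n) (hL : IsClosed L)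
    {C : Set M} (hC : IsClosed C) (hCn : HasCovDim C n) (hCL : ∀ y ∈ C, base y ∈ L) :
    HasCovDim L n := by
  have := isCompact_iff_compactSpace.1 hC.isCompact
  let f (y : C) : L := ⟨base y.1, hCL y y.2⟩
  have hf : Topology.IsClosedEmbedding f :=
    ((continuous_base.comp continuous_subtype_val).subtype_mk _).isClosedEmbedding
      fun y z h ↦ Subtype.ext (base_injective (congrArg Subtype.val h))
  exact .of_isClosedEmbedding hf
    ((covDimLE hM).of_isClosedEmbedding hL.isClosedEmbedding_subtypeVal) hCn

end partialDuplicate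

theorem luzin_eberlein_no_zerodim_general {M : Type} [TopologicalSpace M] [CompactSpace M]
    [TopologicalSpace.MetrizableSpace M] {n : ℕ} (hn : 1 ≤ n) (hM : CovDimLE M n)
    (hdim : ∀ U : Set M, IsOpen U → U.Nonempty → ∃ C ⊆ U, IsClosed C ∧ HasCovDim C n)
    {κ : Cardinal} (hκ : Cardinal.aleph0 < κ) {X : Set M} (hX : Cardinal.aleph0 ≤ Cardinal.mk X)
    (hLuzin : ∀ A : Set M, IsNowhereDense A → Cardinal.mk ↥(A ∩ X) < κ) :
    ∃ (K : Type) (tK : TopologicalSpace K), CompactSpace K ∧ IsUniformEberlein K ∧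
      tweight K = Cardinal.mk X ∧ HasCovDim K n ∧
      (∀ L : Set K, IsClosed L → κ ≤ tweight ↥L → HasCovDim ↥L n) ∧
      (∀ L : Set K, IsClosed L → κ ≤ tweight ↥L → ¬ IsZeroDim ↥L) := by
  let := TopologicalSpace.metrizableSpaceMetric M
  have := perfectSpace_of_forall_exists_hasCovDim hn hdim
  have hdimL {L : Set (partialDuplicate X)} (hL : IsClosed L) (hκL : κ ≤ tweight L) :
      HasCovDim L n := by
    obtain ⟨U, hU, hne, hUL⟩ := partialDuplicate.exists_isOpen_forall_base_mem hκ hLuzin hL hκL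
    obtain ⟨C, hCU, hC, hCn⟩ := hdim U hU hne
    exact partialDuplicate.hasCovDim_of_forall_base_mem hM hL hC hCn fun y hy ↦ hUL y (hCU hy)
  have hK : HasCovDim (partialDuplicate X) n := by
    obtain ⟨x⟩ := Cardinal.mk_ne_zero_iff.1 (Cardinal.aleph0_pos.trans_le hX).ne'
    obtain ⟨C, -, hC, hCn⟩ := hdim Set.univ isOpen_univ ⟨x, trivial⟩
    exact .of_isClosedEmbedding
      (partialDuplicate.continuous_base.isClosedEmbedding partialDuplicate.base_injective)
      (partialDuplicate.covDimLE hM) (.of_isClosedEmbedding hC.isClosedEmbedding_subtypeVal hM hCn)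
  refine ⟨partialDuplicate X, inferInstance, inferInstance,
    partialDuplicate.isUniformEberlein isUniformEberlein_of_metrizableSpace,
    partialDuplicate.tweight_eq_mk hX, hK, fun L ↦ hdimL, fun L hL hκL ↦ ?_⟩
  have := isCompact_iff_compactSpace.1 hL.isCompact
  exact (hdimL hL hκL).not_isZeroDim hn

end LuzinSets

/-- from a `(λ,κ)`-Luzin set in `[0,1]^n` one obtains an
`n`-dimensional uniform Eberlein compact space of weight `λ` all of whose
closed subspaces of weight `≥ κ` have covering dimension `n`; in particular it
has no closed zero-dimensional subspace of weight `≥ κ`. -/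
theorem luzin_eberlein_no_zerodim {n : ℕ} (hn : 1 ≤ n) {κ lam : Cardinal}
    (hκ : Cardinal.aleph0 < κ) (hκlam : κ ≤ lam)
    (hLuzin : ∃ X : Set (Cube n), Cardinal.mk X = lam ∧
      ∀ A : Set (Cube n), IsMeagre A → Cardinal.mk ↥(A ∩ X) < κ) :
    ∃ (K : Type) (tK : TopologicalSpace K), CompactSpace K ∧ IsUniformEberlein K ∧
      tweight K = lam ∧ HasCovDim K n ∧
      (∀ L : Set K, IsClosed L → κ ≤ tweight ↥L → HasCovDim ↥L n) ∧
      (∀ L : Set K, IsClosed L → κ ≤ tweight ↥L → ¬ IsZeroDim ↥L) := by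
  obtain ⟨X, rfl, hX⟩ := hLuzin
  exact luzin_eberlein_no_zerodim_general hn (covDimLE_cube n)
    (fun _ ↦ exists_isClosed_hasCovDim_of_isOpen_cube) hκ (hκ.le.trans hκlam)
    fun A hA ↦ hX A hA.isMeagre
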